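/- A quasi-identity in the language {∧, ∨, °, 0, 1} is admissible in the four-element chain algebra K₂ if and only if it is valid in the seven-element chain MS-algebra C₇. -/

import Mathlib

/-!
Admissibility in `K₂` is validity in the free algebra of `V(K₂)` on countably many generators, so the
claim is that this free algebra and `C₇` generate the same quasivariety.

* `C₇` embeds into the free algebra on two generators `x, y`: the terms `embTerm i` realise the
  element `cᵢ₊₁`. Under an assignment `x ↦ a, y ↦ b` in `K₂` they take the values of a homomorphism
  `pointHom a b : C₇ → K₂` (`isHom_pointHom`), and these homomorphisms separate the points of `C₇`
  (`pointHom_separates`). Hence a failure of a quasi-identity in `C₇` at an assignment `v` yields the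
  substitution `n ↦ embTerm (v n)` witnessing that it is not admissible.
* `K₂` is a homomorphic image of `C₇`, namely under `pointHom 2 1`. Together with separation, `K₂` and
  `C₇` satisfy the same identities (`idValid_iff`), so a quasi-identity valid in `C₇` is admissible in
  `C₇`, and therefore in `K₂`.
-/

/-- Terms in the language {∧, ∨, °, 0, 1} over a set `V` of variables. -/
inductive MSTerm (V : Type) : Type
  | var : V → MSTerm V
  | meet : MSTerm V → MSTerm V → MSTerm V
  | join : MSTerm V → MSTerm V → MSTerm V
  | star : MSTerm V → MSTerm V
  | zero : MSTerm V
  | one : MSTerm V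

/-- An algebra in the language {∧, ∨, °, 0, 1}. -/
structure MSAlg where
  carrier : Type
  meet : carrier → carrier → carrier
  join : carrier → carrier → carrier
  star : carrier → carrier
  zero : carrier
  one : carrier

/-- Evaluation of a term in an algebra under an assignment of the variables. -/
def MSTerm.eval {V : Type} (A : MSAlg) (v : V → A.carrier) : MSTerm V → A.carrier
  | .var x => v x
  | .meet t s => A.meet (t.eval A v) (s.eval A v)
  | .join t s => A.join (t.eval A v) (s.eval A v)
  | .star t => A.star (t.eval A v)
  | .zero => A.zero
  | .one => A.one

/-- Substitution of terms for variables. -/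
def MSTerm.subst {V W : Type} (s : V → MSTerm W) : MSTerm V → MSTerm W
  | .var x => s x
  | .meet t u => .meet (t.subst s) (u.subst s)
  | .join t u => .join (t.subst s) (u.subst s)
  | .star t => .star (t.subst s)
  | .zero => .zero
  | .one => .one

/-- Validity of the identity `φ ≈ ψ` in the algebra `A`. -/
def MSIdValid {V : Type} (A : MSAlg) (φ ψ : MSTerm V) : Prop :=
  ∀ v : V → A.carrier, φ.eval A v = ψ.eval A v

/-- Validity of the quasi-identity `Γ ⇒ φ ≈ ψ` in the algebra `A`. -/
def MSQValid (A : MSAlg) (Γ : List (MSTerm ℕ × MSTerm ℕ)) (φ ψ : MSTerm ℕ) : Prop :=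
  ∀ v : ℕ → A.carrier,
    (∀ p ∈ Γ, p.1.eval A v = p.2.eval A v) → φ.eval A v = ψ.eval A v

/-- Admissibility of the quasi-identity `Γ ⇒ φ ≈ ψ` in the algebra `M`. -/
def MSAdmissible (M : MSAlg) (Γ : List (MSTerm ℕ × MSTerm ℕ)) (φ ψ : MSTerm ℕ) : Prop :=
  ∀ s : ℕ → MSTerm ℕ,
    (∀ p ∈ Γ, MSIdValid M (p.1.subst s) (p.2.subst s)) →
    MSIdValid M (φ.subst s) (ψ.subst s)

/-- `A` is an MS-algebra: a bounded distributive lattice with a unary `°`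
satisfying x ≤ x°°, (x ∧ y)° = x° ∨ y°, and 1° = 0. -/
def IsMSAlg (A : MSAlg) : Prop :=
  (∀ x y, A.meet x y = A.meet y x) ∧
  (∀ x y, A.join x y = A.join y x) ∧
  (∀ x y z, A.meet (A.meet x y) z = A.meet x (A.meet y z)) ∧
  (∀ x y z, A.join (A.join x y) z = A.join x (A.join y z)) ∧
  (∀ x y, A.meet x (A.join x y) = x) ∧
  (∀ x y, A.join x (A.meet x y) = x) ∧
  (∀ x y z, A.meet x (A.join y z) = A.join (A.meet x y) (A.meet x z)) ∧
  (∀ x, A.join x A.zero = x) ∧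
  (∀ x, A.meet x A.one = x) ∧
  (∀ x, A.meet x (A.star (A.star x)) = x) ∧
  (∀ x y, A.star (A.meet x y) = A.join (A.star x) (A.star y)) ∧
  A.star A.one = A.zero

/-- The Dershowitz–Manna multiset ordering (induced by the usual order on `ℕ`). -/
def MultisetLE (N N' : Multiset ℕ) : Prop :=
  ∀ x : ℕ, N'.count x < N.count x → ∃ y : ℕ, x < y ∧ N.count y < N'.count y

/-- K₂: the four-element MS-algebra on the chain 0 < a < c < 1
(as `Fin 4`: 0 ↦ 0, a ↦ 1, c ↦ 2, 1 ↦ 3), with °0 = 1, °a = a, °c = 0, °1 = 0. -/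
def K2alg : MSAlg := ⟨Fin 4, min, max, ![3, 1, 0, 0], 0, 3⟩

/-- C₇: the seven-element chain MS-algebra c₁ < ⋯ < c₇
(as `Fin 7`: cᵢ ↦ i − 1), with °c₁ = c₇, °c₂ = c₆, °c₃ = c₄, °c₄ = c₃,
°c₅ = c₂, °c₆ = c₂, °c₇ = c₁. -/
def C7alg : MSAlg := ⟨Fin 7, min, max, ![6, 5, 3, 2, 1, 1, 0], 0, 6⟩

theorem MSTerm.eval_subst {V W : Type} (A : MSAlg) (v : W → A.carrier) (s : V → MSTerm W)
    (t : MSTerm V) : (t.subst s).eval A v = t.eval A (fun x => (s x).eval A v) := by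
  induction t <;> simp_all [MSTerm.subst, MSTerm.eval]

/-- `h` is a homomorphism of algebras in the language {∧, ∨, °, 0, 1}. -/
def IsHom (A B : MSAlg) (h : A.carrier → B.carrier) : Prop :=
  (∀ x y, h (A.meet x y) = B.meet (h x) (h y)) ∧
  (∀ x y, h (A.join x y) = B.join (h x) (h y)) ∧
  (∀ x, h (A.star x) = B.star (h x)) ∧
  h A.zero = B.zero ∧ h A.one = B.one

theorem IsHom.eval {A B : MSAlg} {h : A.carrier → B.carrier} (hh : IsHom A B h) {V : Type}
    (v : V → A.carrier) (t : MSTerm V) : t.eval B (fun x => h (v x)) = h (t.eval A v) := by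
  obtain ⟨h1, h2, h3, h4, h5⟩ := hh
  induction t <;> simp_all [MSTerm.eval]

/-- The term `x ∧ x°` in the variable with index `n`. In `K₂` its value is `a` if the variable has
value `a`, and `0` otherwise. -/
def isATerm (n : ℕ) : MSTerm ℕ := .meet (.var n) (.star (.var n))

/-- The term `x ∨ x°` in the variable with index `n`. -/
def excTerm (n : ℕ) : MSTerm ℕ := .join (.var n) (.star (.var n))

/-- The term representing `c₃`; in `K₂` its value is `a` if at least one of the two variables has
value `a`, and `0` otherwise. -/
def midTerm : MSTerm ℕ :=
  .meet (.join (isATerm 1) (isATerm 0)) (.star (.star (excTerm 0)))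

/-- Terms in two variables representing the elements of `C₇` in the free algebra of `V(K₂)`. -/
def embTerm : Fin 7 → MSTerm ℕ :=
  ![.zero, isATerm 0, midTerm, .star midTerm, .join (excTerm 0) (.star midTerm),
    .star (isATerm 0), .one]

/-- The map `C₇ → K₂` sending each element to the value of its term when the two variables have
values `a` and `b`. -/
def pointHom (a b : Fin 4) (i : Fin 7) : Fin 4 :=
  (embTerm i).eval K2alg (fun n => if n = 0 then a else b)

theorem pointHom_eq (u : ℕ → Fin 4) (i : Fin 7) :
    (embTerm i).eval K2alg u = pointHom (u 0) (u 1) i := by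
  fin_cases i <;> rfl

theorem isHom_pointHom (a b : Fin 4) : IsHom C7alg K2alg (pointHom a b) := by
  refine ⟨?_, ?_, ?_, ?_, ?_⟩
  · change ∀ x y : Fin 7, pointHom a b (min x y) = min (pointHom a b x) (pointHom a b y)
    revert a b; decide
  · change ∀ x y : Fin 7, pointHom a b (max x y) = max (pointHom a b x) (pointHom a b y)
    revert a b; decide
  · change ∀ x : Fin 7, pointHom a b ((![6, 5, 3, 2, 1, 1, 0] : Fin 7 → Fin 7) x) =
      (![3, 1, 0, 0] : Fin 4 → Fin 4) (pointHom a b x)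
    revert a b; decide
  · rfl
  · rfl

theorem pointHom_separates :
    ∀ i j : Fin 7, (∀ a b, pointHom a b i = pointHom a b j) → i = j := by
  decide

/-- The quotient map `C₇ → K₂` arises at the assignment `x ↦ c, y ↦ a`. -/
theorem pointHom_surjective : ∀ k : Fin 4, ∃ i, pointHom 2 1 i = k := by
  decide

theorem idValid_iff (φ ψ : MSTerm ℕ) : MSIdValid K2alg φ ψ ↔ MSIdValid C7alg φ ψ := by
  constructor
  · intro h v
    refine pointHom_separates _ _ fun a b => ?_
    rw [← (isHom_pointHom a b).eval, ← (isHom_pointHom a b).eval]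
    exact h _
  · intro h v
    choose w hw using fun n => pointHom_surjective (v n)
    have hv : v = fun n => pointHom 2 1 (w n) := funext fun n => (hw n).symm
    rw [hv]
    exact ((isHom_pointHom 2 1).eval w φ).trans
      ((congrArg _ (h w)).trans ((isHom_pointHom 2 1).eval w ψ).symm)

/-- The embedding of `C₇` into the free algebra commutes with the evaluation of terms. -/
theorem eval_subst_embTerm (v : ℕ → Fin 7) (u : ℕ → Fin 4) (t : MSTerm ℕ) :
    (t.subst (fun n => embTerm (v n))).eval K2alg u =
      pointHom (u 0) (u 1) (t.eval C7alg v) := by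
  refine (MSTerm.eval_subst K2alg u _ t).trans (Eq.trans ?_
    ((isHom_pointHom (u 0) (u 1)).eval v t))
  exact congrArg (fun w => t.eval K2alg w) (funext fun n => pointHom_eq u (v n))

theorem statement10 (Γ : List (MSTerm ℕ × MSTerm ℕ)) (φ ψ : MSTerm ℕ) :
    MSAdmissible K2alg Γ φ ψ ↔ MSQValid C7alg Γ φ ψ := by
  constructor
  · intro h v hv
    have key := h (fun n => embTerm (v n)) fun p hp u =>
      (eval_subst_embTerm v u p.1).trans
        ((congrArg _ (hv p hp)).trans (eval_subst_embTerm v u p.2).symm)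
    exact pointHom_separates _ _ fun a b =>
      (eval_subst_embTerm v (fun n => if n = 0 then a else b) φ).symm.trans
        ((key _).trans (eval_subst_embTerm v _ ψ))
  · intro h s hs
    rw [idValid_iff]
    intro v
    rw [MSTerm.eval_subst, MSTerm.eval_subst]
    refine h _ fun p hp => ?_
    rw [← MSTerm.eval_subst, ← MSTerm.eval_subst]
    exact (idValid_iff _ _).1 (hs p hp) v
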